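/- arXiv:2412.00439 — 2 statements merged into one kernel-verified Lean document; each statement's English description precedes it below -/
import Mathlib

section
/- Let K be an algebraically closed field, let A be a commutative K-algebra which is an integral domain, and let F be a field extension of K. Then the tensor product A ⊗_K F is an integral domain. -/
open scoped TensorProduct

/-!
Fix a `K`-basis `e` of `F`; it induces an `A`-basis of `A ⊗[K] F`, so elements of `A ⊗[K] F` are
determined by their coordinates in `A`. Let `x, y ≠ 0`, with nonzero coordinates `a` of `x` and
`b` of `y`. The finitely many nonzero coordinates of `x` and `y` generate a `K`-subalgebra `S` of
finite type of the domain `A`, and `x, y` come from `x', y' : S ⊗[K] F`. Since `a * b ≠ 0`, the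
Nullstellensatz (`exists_algHom_ne_zero`) gives a `K`-algebra homomorphism `φ : S → K` that does
not kill `a * b`. Then `φ ⊗ id` sends `x'` and `y'` to elements of `K ⊗[K] F ≃ F` with a nonzero
coordinate, hence to nonzero elements of a field, so `x' * y' ≠ 0`. As `S ⊗[K] F → A ⊗[K] F` is
injective, `x * y ≠ 0`.
-/

/-- Nullstellensatz: a nonzero element of a finitely generated domain over an algebraically closed
field does not vanish at some `K`-point. The point comes from a maximal ideal of the localization
away from the element. -/
lemma exists_algHom_ne_zero {K S : Type*} [Field K] [IsAlgClosed K] [CommRing S] [IsDomain S]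
    [Algebra K S] [Algebra.FiniteType K S] {c : S} (hc : c ≠ 0) :
    ∃ φ : S →ₐ[K] K, φ c ≠ 0 := by
  let L := Localization.Away c
  have : Nontrivial L := (IsLocalization.injective (M := Submonoid.powers c) L
    (powers_le_nonZeroDivisors_of_noZeroDivisors hc)).nontrivial
  have : Algebra.FiniteType S L := IsLocalization.finiteType_of_monoid_fg (Submonoid.powers c) L
  have : Algebra.FiniteType K L := Algebra.FiniteType.trans (S := S) inferInstance inferInstance
  obtain ⟨m, hm⟩ := Ideal.exists_maximal L
  let _ : Field (L ⧸ m) := Ideal.Quotient.field m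
  have : Module.Finite K (L ⧸ m) := finite_of_finite_type_of_isJacobsonRing K (L ⧸ m)
  let ψ : K ≃ₐ[K] (L ⧸ m) := AlgEquiv.ofBijective (Algebra.ofId K (L ⧸ m))
    IsAlgClosed.algebraMap_bijective_of_isIntegral
  let π : L →ₐ[K] L ⧸ m := Ideal.Quotient.mkₐ K m
  let φ : S →ₐ[K] K := (ψ.symm : (L ⧸ m) →ₐ[K] K).comp (π.comp (IsScalarTower.toAlgHom K S L))
  have hu : IsUnit (algebraMap S L c) := IsLocalization.Away.algebraMap_isUnit c
  exact ⟨φ, ((hu.map π).map (ψ.symm : (L ⧸ m) →ₐ[K] K)).ne_zero⟩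

/-- Coordinates with respect to the bases induced by `e` are natural in the algebra. -/
lemma basis_repr_map {K A B F ι : Type*} [Field K] [CommRing A] [Algebra K A] [CommRing B]
    [Algebra K B] [Field F] [Algebra K F] (e : Module.Basis ι K F) (φ : A →ₐ[K] B)
    (x : A ⊗[K] F) (i : ι) :
    (Algebra.TensorProduct.basis B e).repr (Algebra.TensorProduct.map φ (AlgHom.id K F) x) i =
      φ ((Algebra.TensorProduct.basis A e).repr x i) := by
  induction x using TensorProduct.induction_on with
  | zero => simp
  | tmul a f => simp
  | add x y hx hy => simp only [map_add, Finsupp.add_apply, hx, hy]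

/-- An element whose coordinates all lie in a subalgebra `S` comes from `S ⊗[K] F`. -/
lemma exists_map_val_eq {K A F ι : Type*} [Field K] [CommRing A] [Algebra K A]
    [Field F] [Algebra K F] (e : Module.Basis ι K F) (S : Subalgebra K A) (x : A ⊗[K] F)
    (h : ∀ i, (Algebra.TensorProduct.basis A e).repr x i ∈ S) :
    ∃ x' : S ⊗[K] F, Algebra.TensorProduct.map S.val (AlgHom.id K F) x' = x := by
  refine ⟨∑ i ∈ ((Algebra.TensorProduct.basis A e).repr x).support,
    (⟨_, h i⟩ : S) ⊗ₜ[K] e i, ?_⟩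
  conv_rhs => rw [← (Algebra.TensorProduct.basis A e).linearCombination_repr x]
  simp [Finsupp.linearCombination_apply, Finsupp.sum, TensorProduct.smul_tmul']

/-- algebraic fact underlying the integrality assertion of Lemma A.1.
Let `K` be an algebraically closed field, let `A` be a commutative `K`-algebra which is an
integral domain, and let `F` be a field extension of `K`.  Then `A ⊗[K] F` is an integral
domain. -/
theorem stmt4 (K A F : Type*) [Field K] [IsAlgClosed K]
    [CommRing A] [IsDomain A] [Algebra K A]
    [Field F] [Algebra K F] :
    IsDomain (A ⊗[K] F) := by
  classical
  let e := Module.Free.chooseBasis K F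
  let bA := Algebra.TensorProduct.basis A e
  have : Nontrivial (A ⊗[K] F) := inferInstance
  suffices NoZeroDivisors (A ⊗[K] F) from NoZeroDivisors.to_isDomain _
  refine ⟨fun {x y} hxy => ?_⟩
  by_contra! hne
  obtain ⟨hx, hy⟩ := hne
  obtain ⟨i, hi⟩ : ∃ i, bA.repr x i ≠ 0 := by
    by_contra! h
    exact hx (bA.ext_elem fun i => by simp [h i])
  obtain ⟨j, hj⟩ : ∃ j, bA.repr y j ≠ 0 := by
    by_contra! h
    exact hy (bA.ext_elem fun i => by simp [h i])
  let s : Finset A := (bA.repr x).support.image (bA.repr x) ∪ (bA.repr y).support.image (bA.repr y)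
  let S := Algebra.adjoin K (s : Set A)
  have hfg : Algebra.FiniteType K S := S.fg_iff_finiteType.mp (Subalgebra.fg_adjoin_finset s)
  have mem (z : A ⊗[K] F) (hz : (bA.repr z).support.image (bA.repr z) ⊆ s) (k) :
      bA.repr z k ∈ S := by
    by_cases h : bA.repr z k = 0
    · rw [h]; exact S.zero_mem
    · exact Algebra.subset_adjoin
        (hz (Finset.mem_image_of_mem _ (Finsupp.mem_support_iff.mpr h)))
  obtain ⟨x', hx'⟩ := exists_map_val_eq e S x (mem x Finset.subset_union_left)
  obtain ⟨y', hy'⟩ := exists_map_val_eq e S y (mem y Finset.subset_union_right)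
  have hmul : x' * y' = 0 := by
    refine (Algebra.TensorProduct.basis S e).ext_elem fun k => Subtype.val_injective ?_
    have h := basis_repr_map e S.val (x' * y') k
    rw [map_mul, hx', hy', hxy] at h
    simpa using h.symm
  let a := (Algebra.TensorProduct.basis S e).repr x' i
  let b := (Algebra.TensorProduct.basis S e).repr y' j
  have ha : a ≠ 0 := fun h => hi (by
    change (Algebra.TensorProduct.basis A e).repr x i = 0
    rw [← hx', basis_repr_map]
    exact congrArg S.val h)
  have hb : b ≠ 0 := fun h => hj (by
    change (Algebra.TensorProduct.basis A e).repr y j = 0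
    rw [← hy', basis_repr_map]
    exact congrArg S.val h)
  obtain ⟨φ, hφ⟩ := exists_algHom_ne_zero (K := K) (mul_ne_zero ha hb)
  rw [map_mul] at hφ
  let Φ := Algebra.TensorProduct.map φ (AlgHom.id K F)
  have : IsDomain (K ⊗[K] F) := (Algebra.TensorProduct.lid K F).toMulEquiv.isDomain F
  have hΦ : Φ x' * Φ y' = 0 := by rw [← map_mul, hmul, map_zero]
  rcases mul_eq_zero.mp hΦ with h | h
  · exact left_ne_zero_of_mul hφ (by
      change φ ((Algebra.TensorProduct.basis S e).repr x' i) = 0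
      rw [← basis_repr_map, h, map_zero, Finsupp.zero_apply])
  · exact right_ne_zero_of_mul hφ (by
      change φ ((Algebra.TensorProduct.basis S e).repr y' j) = 0
      rw [← basis_repr_map, h, map_zero, Finsupp.zero_apply])
end

section
/- Let K be a field, let X be a scheme of finite type over Spec K, and let F be a field extension of K. Then the Krull dimension of the underlying topological space of the base change X_F = X ×_{Spec K} Spec F equals the Krull dimension of the underlying topological space of X. -/
/-!
Krull dimension can be computed on an open cover: a finite chain of irreducible closed subsets
meets any open set which meets its smallest member, and intersecting with that open set keeps the
inclusions strict. An affine open cover of `X` pulls back to an affine open cover of `X_F`, so it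
suffices to compare `A` and `F ⊗[K] A` for a finitely generated `K`-algebra `A`. If `A ≠ 0`,
Noether normalization gives an injective integral map `K[x₁, …, xₛ] → A`; since `F` is flat over
`K`, its base change `F[x₁, …, xₛ] → F ⊗[K] A` is again injective and integral. Injective integral
maps preserve Krull dimension (lying over, going up and incomparability), so both dimensions
equal `s`.
-/

open AlgebraicGeometry CategoryTheory Limits
open scoped TensorProduct

theorem ringKrullDim_eq_of_injective_of_isIntegral {R S : Type*} [CommRing R] [CommRing S]
    (f : R →+* S) (hf : Function.Injective f) (hi : f.IsIntegral) :
    ringKrullDim S = ringKrullDim R := by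
  algebraize [f]
  apply le_antisymm
  · exact Order.krullDim_le_of_strictMono (PrimeSpectrum.comap (algebraMap R S))
      fun I J h ↦ Ideal.IsIntegral.comap_lt_comap (R := R) (I := I.asIdeal) (J := J.asIdeal) h
  · refine iSup_le fun l ↦ ?_
    obtain ⟨P, hP⟩ := hi.comap_surjective hf l.head
    have : P.asIdeal.LiesOver (RelSeries.head l).asIdeal := ⟨by rw [← hP]; rfl⟩
    obtain ⟨L, hL, -⟩ := Ideal.exists_ltSeries_of_hasGoingUp (S := S) l P.asIdeal
    rw [← hL]
    exact le_iSup (fun l : LTSeries (PrimeSpectrum S) ↦ (l.length : WithBot ℕ∞)) L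

theorem ringKrullDim_tensorProduct_of_field (K F A : Type*) [Field K] [Field F] [Algebra K F]
    [CommRing A] [Algebra K A] [Algebra.FiniteType K A] :
    ringKrullDim (F ⊗[K] A) = ringKrullDim A := by
  nontriviality A using ringKrullDim_eq_bot_of_subsingleton
  obtain ⟨s, g, hg, hi⟩ := exists_integral_inj_algHom_of_fg K A
  have hinj : Function.Injective (Algebra.TensorProduct.map (AlgHom.id F F) g) :=
    Module.Flat.lTensor_preserves_injective_linearMap (M := F) g.toLinearMap hg
  have hgint : (Algebra.TensorProduct.map (AlgHom.id F F) g).toRingHom.IsIntegral := by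
    intro x
    -- `c ⊗ a = (c ⊗ 1) * (1 ⊗ a)`: the first factor is in the image, the second is a root of the
    -- integral equation of `a` pushed forward along `includeRight`.
    induction x with
    | zero => exact RingHom.isIntegralElem_zero _
    | add x y hx hy => exact RingHom.IsIntegralElem.add _ hx hy
    | tmul c a =>
      obtain ⟨p, hp, hpa⟩ := hi a
      have hc : (Algebra.TensorProduct.map (AlgHom.id F F) g).toRingHom.IsIntegralElem
          (c ⊗ₜ 1) := by
        have := RingHom.isIntegralElem_map
          (f := (Algebra.TensorProduct.map (AlgHom.id F F) g).toRingHom)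
          (x := c ⊗ₜ[K] (1 : MvPolynomial (Fin s) K))
        simpa using this
      have ha : (Algebra.TensorProduct.map (AlgHom.id F F) g).toRingHom.IsIntegralElem
          (1 ⊗ₜ a) := by
        refine ⟨p.map (Algebra.TensorProduct.includeRight :
          MvPolynomial (Fin s) K →ₐ[K] F ⊗[K] MvPolynomial (Fin s) K).toRingHom, hp.map _, ?_⟩
        have h := Polynomial.hom_eval₂ p g.toRingHom
          (Algebra.TensorProduct.includeRight : A →ₐ[K] F ⊗[K] A).toRingHom a
        rw [hpa, map_zero] at h
        rw [Polynomial.eval₂_map]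
        refine Eq.trans ?_ h.symm
        congr 1
      simpa using RingHom.IsIntegralElem.mul _ hc ha
  rw [ringKrullDim_eq_of_injective_of_isIntegral _ hinj hgint,
    ringKrullDim_eq_of_injective_of_isIntegral g.toRingHom hg hi,
    ringKrullDim_eq_of_ringEquiv (MvPolynomial.algebraTensorAlgEquiv K F).toRingEquiv]
  simp

theorem topologicalKrullDim_eq_iSup_of_isOpenEmbedding {X ι : Type*} [TopologicalSpace X]
    {U : ι → Type*} [∀ i, TopologicalSpace (U i)] (j : ∀ i, U i → X)
    (hj : ∀ i, Topology.IsOpenEmbedding (j i)) (hcov : ∀ x, ∃ i, x ∈ Set.range (j i)) :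
    topologicalKrullDim X = ⨆ i, topologicalKrullDim (U i) := by
  apply le_antisymm
  · refine iSup_le fun l ↦ ?_
    obtain ⟨x, hx⟩ := l.head.isIrreducible.nonempty
    obtain ⟨i, y, rfl⟩ := hcov x
    refine le_trans ?_ (le_iSup _ i)
    -- Every member of the chain contains its head, hence meets `U i` at `y`.
    let e := TopologicalSpace.IrreducibleCloseds.orderIsoOfIsOpenEmbedding (j i) (hj i)
    let L : LTSeries {V : TopologicalSpace.IrreducibleCloseds X | (j i ⁻¹' V).Nonempty} :=
      { length := l.length
        toFun k := ⟨l k, y, LTSeries.head_le l k hx⟩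
        step k := l.step k }
    exact le_iSup (fun l : LTSeries (TopologicalSpace.IrreducibleCloseds (U i)) ↦
      (l.length : WithBot ℕ∞)) (L.map e.symm e.symm.strictMono)
  · exact iSup_le fun i ↦ (hj i).isInducing.topologicalKrullDim_le

theorem topologicalKrullDim_pullback_Spec (K F : Type) [Field K] [Field F] [Algebra K F]
    {A : CommRingCat.{0}} (f : Spec A ⟶ Spec (CommRingCat.of K))
    (hf : LocallyOfFiniteType f) :
    topologicalKrullDim
      ↥(pullback f (Spec.map (CommRingCat.ofHom (algebraMap K F)))) =
      topologicalKrullDim ↥(Spec A) := by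
  obtain ⟨φ, rfl⟩ := Spec.map_surjective f
  let : Algebra K A := φ.hom.toAlgebra
  have : Algebra.FiniteType K A :=
    (HasRingHomProperty.Spec_iff (P := @LocallyOfFiniteType)).mp hf
  have e := (pullbackSpecIso K A F).hom.homeomorph.isHomeomorph.topologicalKrullDim_eq
  refine e.trans ?_
  refine (PrimeSpectrum.topologicalKrullDim_eq_ringKrullDim (R := A ⊗[K] F)).trans ?_
  rw [ringKrullDim_eq_of_ringEquiv (Algebra.TensorProduct.comm K A F).toRingEquiv,
    ringKrullDim_tensorProduct_of_field]
  exact (PrimeSpectrum.topologicalKrullDim_eq_ringKrullDim (R := A)).symm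

/-- Lemma A.1, dimension part.
Let `K` be a field, let `X` be a scheme of finite type over `Spec K` (i.e. the structure
morphism is quasi-compact and locally of finite type), and let `F` be a field extension of `K`.
Then the Krull dimension of the underlying topological space of the base change
`X_F = X ×_{Spec K} Spec F` equals the Krull dimension of the underlying topological space
of `X`. -/
theorem stmt6 (K F : Type) [Field K] [Field F] [Algebra K F]
    (X : Scheme) (f : X ⟶ Spec (CommRingCat.of K))
    [LocallyOfFiniteType f] [QuasiCompact f] :
    topologicalKrullDim ↥(pullback f (Spec.map (CommRingCat.ofHom (algebraMap K F)))) =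
      topologicalKrullDim ↥X := by
  have hsup {Y : Scheme.{0}} (𝒰 : Y.OpenCover) :
      topologicalKrullDim Y = ⨆ i, topologicalKrullDim (𝒰.X i) :=
    topologicalKrullDim_eq_iSup_of_isOpenEmbedding (fun i ↦ 𝒰.f i)
      (fun i ↦ (𝒰.f i).isOpenEmbedding) fun x ↦ 𝒰.exists_eq x
  rw [hsup X.affineCover,
    hsup (Scheme.Pullback.openCoverOfLeft X.affineCover f
      (Spec.map (CommRingCat.ofHom (algebraMap K F))))]
  have hft (i : X.affineCover.I₀) : LocallyOfFiniteType (X.affineCover.f i ≫ f) := inferInstance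
  exact iSup_congr fun (i : X.affineCover.I₀) ↦
    topologicalKrullDim_pullback_Spec K F (X.affineCover.f i ≫ f) (hft i)
end
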